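/- Let n ≥ 2, 0 < q ≤ 1, and let a_1 ≥ a_2 ≥ … ≥ a_n ≥ 0 be real numbers, not all zero. Then the Lorentz space ℓ_{w,q}^n is isometric to a subspace of L_q if and only if a_1 − a_2 = a_2 − a_3 = … = a_{n−1} − a_n. -/

import Mathlib

/-!
Write `N x = ∑ aᵢ (xᵢ*) ^ q` for the `q`-th power of the Lorentz functional.

**Sufficiency.** If the weights decrease by a constant step `d`, then
`N x = aₙ ∑ |xᵢ| ^ q + (d / 2) ∑_{i ≠ j} max |xᵢ| |xⱼ| ^ q`, because after rearrangement the entry of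
rank `i` is the maximum of exactly `n - i` pairs (`lorentz_eq_of_arith`). The identity
`max |s| |t| = |(s + t) / 2| + |(s - t) / 2|` turns each maximum into an `ℓ₁` norm on a plane, and
`ℓ₁` planes embed into `L_q` for `q ≤ 1`: if `ξ, η` are independent standard Cauchy variables, then
`u ξ + v η` is distributed as `(|u| + |v|) ξ`, whose `q`-th absolute moment is finite when `q < 1`
(`exists_measure_abs_add_abs_rpow`). Positive combinations of representable functions are
representable by adding measures.

**Necessity.** Since `|t| ^ q` is conditionally negative definite on `ℝ`, so is `N`, by integration.
Restrict `N` to the vectors `(8d, …, 8d, 4d + u₁, 4d + u₂, 4d + u₃, 0, …, 0)`, where the three middle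
entries sit at three consecutive ranks. There `N` is a sum of functions of at most two of the `uᵢ`
and of `c (4d + max uᵢ) ^ q`, where `c` is the second difference of the weights at these ranks
(`lorentz_testVec`). Applying a second difference in each `uᵢ` to `-N` produces a positive definite
function `H` on `ℤ⁴` and annihilates everything except the last term: for `d ≥ 1` and with
`f r = r ^ q`,
`H (d, 0, 0, 0) = -c (2 f (4d) - f (4d - 1) - f (4d + 1))` and
`H (d, 1, 0, 0) = -c (f (4d + 1) - f (4d))`.
The first sequence is summable by concavity of `f`; the second is of order `|c| d ^ (q - 1)`.
Testing positive definiteness on two combs of `K` points each, with a sign `±1` on the second, bounds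
the sum of `K²` cross terms, of order `|c| K ^ (1 + q)`, by the diagonal part, which is `O(K)`
(`IsPosDef.abs_cross_le`). Letting `K → ∞` gives `c = 0` (`coeff_eq_zero_of_isCondNeg`).
-/

open MeasureTheory

/-- The non-increasing rearrangement of `(|x 0|, …, |x (n-1)|)`. -/
noncomputable def dstar {n : ℕ} (x : Fin n → ℝ) : Fin n → ℝ :=
  fun i => |x (Tuple.sort (fun j => -|x j|) i)|


/-! ### The `ℓ₁` plane in `L_q` -/

open ProbabilityTheory in
/-- The Cauchy density is the Fourier transform of `exp (-2π|v|)`, so Fourier inversion gives the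
characteristic function. -/
theorem charFun_cauchy (t : ℝ) :
    charFun (cauchyMeasure 0 1) t = (Real.exp (-|t|) : ℂ) := by
  have hpi := Real.pi_pos
  set f : ℝ → ℂ := fun v => Complex.exp ((-(2 * Real.pi * |v|) : ℝ) : ℂ) with hf
  have hcont : Continuous f := by rw [hf]; fun_prop
  -- the two halves of the Fourier integral, with a frequency `w`
  have hneg : ∀ w v : ℝ, v ∈ Set.Iic (0:ℝ) →
      Complex.exp (((2 * Real.pi : ℝ) - (2 * Real.pi * w : ℝ) * Complex.I : ℂ) * v) =
      Complex.exp (↑(-2 * Real.pi * v * w) * Complex.I) • f v := by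
    intro w v hv
    rw [hf, smul_eq_mul]
    simp only [abs_of_nonpos (Set.mem_Iic.1 hv)]
    rw [← Complex.exp_add]
    congr 1; push_cast; ring
  have hpos : ∀ w v : ℝ, v ∈ Set.Ioi (0:ℝ) →
      Complex.exp ((-(2 * Real.pi : ℝ) - (2 * Real.pi * w : ℝ) * Complex.I : ℂ) * v) =
      Complex.exp (↑(-2 * Real.pi * v * w) * Complex.I) • f v := by
    intro w v hv
    rw [hf, smul_eq_mul]
    simp only [abs_of_pos (Set.mem_Ioi.1 hv)]
    rw [← Complex.exp_add]
    congr 1; push_cast; ring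
  have hre1 : ∀ w : ℝ, 0 < ((2 * Real.pi : ℝ) - (2 * Real.pi * w : ℝ) * Complex.I : ℂ).re := by
    intro w; simp [hpi]
  have hre2 : ∀ w : ℝ, (-(2 * Real.pi : ℝ) - (2 * Real.pi * w : ℝ) * Complex.I : ℂ).re < 0 := by
    intro w; simp [hpi]
  have hI1 : ∀ w : ℝ, IntegrableOn
      (fun v : ℝ => Complex.exp (↑(-2 * Real.pi * v * w) * Complex.I) • f v) (Set.Iic 0) := fun w =>
    (integrableOn_exp_mul_complex_Iic (hre1 w) 0).congr_fun (hneg w) measurableSet_Iic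
  have hI2 : ∀ w : ℝ, IntegrableOn
      (fun v : ℝ => Complex.exp (↑(-2 * Real.pi * v * w) * Complex.I) • f v) (Set.Ioi 0) := fun w =>
    (integrableOn_exp_mul_complex_Ioi (hre2 w) 0).congr_fun (hpos w) measurableSet_Ioi
  have hint : Integrable f := by
    have h := (hI1 0).union (hI2 0)
    rw [Set.Iic_union_Ioi, integrableOn_univ] at h
    simpa using h
  have hF : FourierTransform.fourier f = fun w => (cauchyPDFReal 0 1 w : ℂ) := by
    ext w
    rw [Real.fourier_real_eq_integral_exp_smul, ← intervalIntegral.integral_Iic_add_Ioi (hI1 w) (hI2 w),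
      ← setIntegral_congr_fun measurableSet_Iic (hneg w),
      ← setIntegral_congr_fun measurableSet_Ioi (hpos w),
      integral_exp_mul_complex_Iic (hre1 w), integral_exp_mul_complex_Ioi (hre2 w), cauchyPDFReal_def]
    have h1 : ((2 * Real.pi : ℝ) - (2 * Real.pi * w : ℝ) * Complex.I : ℂ) ≠ 0 := by
      intro h; have := hre1 w; rw [h] at this; simp at this
    have h2 : (-(2 * Real.pi : ℝ) - (2 * Real.pi * w : ℝ) * Complex.I : ℂ) ≠ 0 := by
      intro h; have := hre2 w; rw [h] at this; simp at this
    have h3 : (w ^ 2 + 1 : ℂ) ≠ 0 := by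
      have : (w^2+1 : ℝ) ≠ 0 := by positivity
      exact_mod_cast this
    have h4 : (Real.pi : ℂ) ≠ 0 := by exact_mod_cast hpi.ne'
    simp only [Complex.ofReal_zero, mul_zero, Complex.exp_zero]
    rw [div_add_div _ _ h1 h2, div_eq_iff (mul_ne_zero h1 h2)]
    push_cast
    simp only [sub_zero, one_pow]
    field_simp
    linear_combination (-2 * w ^ 2) * Complex.I_sq
  have hF' : Integrable (FourierTransform.fourier f) := by
    rw [hF]; exact (integrable_cauchyPDFReal 0).ofReal
  have hinv := congrFun (hcont.fourierInv_fourier_eq hint hF') (t / (2 * Real.pi))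
  rw [hF, Real.fourierInv_eq'] at hinv
  rw [charFun_apply_real, cauchyMeasure_of_scale_ne_zero 0 one_ne_zero,
    integral_withDensity_eq_integral_toReal_smul (by fun_prop)
      (by simp [cauchyPDF])]
  have hf' : f (t / (2 * Real.pi)) = (Real.exp (-|t|) : ℂ) := by
    simp only [hf, abs_div, abs_of_pos (by positivity : 0 < 2 * Real.pi)]
    rw [Complex.ofReal_exp, mul_div_cancel₀ _ (by positivity : 2 * Real.pi ≠ 0)]
  rw [← hf', ← hinv]
  refine integral_congr_ae (Filter.Eventually.of_forall fun v => ?_)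
  have hv : 2 * Real.pi * inner ℝ v (t / (2 * Real.pi)) = t * v := by
    simp only [RCLike.inner_apply, conj_trivial]
    field_simp
  simp only [hv, cauchyPDF_def, ENNReal.toReal_ofReal (cauchyPDF_pos 0 one_ne_zero v).le]
  rw [smul_eq_mul, Complex.real_smul, mul_comm]
  push_cast
  rfl

/-- The two-dimensional space `ℓ₁` embeds isometrically into `L_q`. For `q = 1` two point masses do;
for `q < 1` the measure is a multiple of the product of two Cauchy laws, which are `1`-stable and have
finite `q`-th absolute moments. -/
theorem exists_measure_abs_add_abs_rpow {q : ℝ} (hq0 : 0 < q) (hq1 : q ≤ 1) :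
    ∃ ν : Measure (ℝ × ℝ), ∀ u v : ℝ,
      Integrable (fun p : ℝ × ℝ => |u * p.1 + v * p.2| ^ q) ν ∧
      ∫ p, |u * p.1 + v * p.2| ^ q ∂ν = (|u| + |v|) ^ q := by
  rcases hq1.eq_or_lt with rfl | hq1
  · refine ⟨Measure.dirac (1, 0) + Measure.dirac (0, 1), fun u v => ?_⟩
    have h1 : ∀ p : ℝ × ℝ, Integrable (fun p : ℝ × ℝ => |u * p.1 + v * p.2| ^ (1:ℝ))
      (Measure.dirac p) := fun p => integrable_dirac (by simp [enorm_lt_top])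
    refine ⟨(h1 _).add_measure (h1 _), ?_⟩
    rw [integral_add_measure (h1 _) (h1 _), integral_dirac, integral_dirac]
    simp
  · open ProbabilityTheory in
    set P := cauchyMeasure 0 1 with hP
    have hint : Integrable (fun s : ℝ => |s| ^ q) P := by
      rw [hP, cauchyMeasure_of_scale_ne_zero 0 one_ne_zero,
        integrable_withDensity_iff_integrable_smul' (by fun_prop) (by simp [cauchyPDF])]
      have h := integrable_rpow_neg_one_add_norm_sq (E := ℝ) (μ := volume) (r := 2 - q)
        (by simp; linarith)
      refine (h.const_mul (Real.pi⁻¹)).mono' ?_ ?_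
      · apply Measurable.aestronglyMeasurable; fun_prop
      · refine Filter.Eventually.of_forall fun s => ?_
        rw [cauchyPDF, ENNReal.toReal_ofReal (cauchyPDF_pos 0 one_ne_zero s).le, cauchyPDFReal_def]
        have hb : (0:ℝ) < 1 + s ^ 2 := by positivity
        have h1 : |s| ^ q ≤ (1 + s ^ 2) ^ (q / 2) := by
          rw [show |s| = (s ^ 2) ^ (1 / 2 : ℝ) by
            rw [← Real.sqrt_eq_rpow, Real.sqrt_sq_eq_abs], ← Real.rpow_mul (by positivity),
            show (1 / 2 * q : ℝ) = q / 2 by ring]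
          gcongr; linarith
        have h2 : (1 + ‖s‖ ^ 2) ^ (-(2 - q) / 2) = (1 + s ^ 2)⁻¹ * (1 + s ^ 2) ^ (q / 2) := by
          rw [Real.norm_eq_abs, sq_abs, ← Real.rpow_neg_one (1 + s ^ 2), ← Real.rpow_add hb]
          congr 1; ring
        rw [h2, Real.norm_of_nonneg (by positivity), smul_eq_mul]
        simp only [sub_zero, NNReal.coe_one, mul_one, one_pow]
        rw [add_comm (s ^ 2), mul_assoc]
        gcongr
    have hmap : ∀ u v : ℝ, (P.prod P).map (fun p => u * p.1 + v * p.2) =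
        P.map ((|u| + |v|) * ·) := by
      intro u v
      have hu : ∀ u : ℝ, IsProbabilityMeasure (P.map (u * ·)) := fun u =>
        Measure.isProbabilityMeasure_map (by fun_prop)
      have := hu u
      have := hu v
      have : (P.prod P).map (fun p => u * p.1 + v * p.2) =
          ((P.map (u * ·)).prod (P.map (v * ·))).map (fun p => p.1 + p.2) := by
        rw [Measure.map_prod_map _ _ (by fun_prop) (by fun_prop),
          Measure.map_map (by fun_prop) (by fun_prop)]
        rfl
      have hpm : IsFiniteMeasure ((P.prod P).map (fun p : ℝ × ℝ => u * p.1 + v * p.2)) := inferInstance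
      apply Measure.ext_of_charFun
      rw [this, charFun_map_add_prod_eq_mul]
      ext t
      rw [Pi.mul_apply, charFun_map_mul, charFun_map_mul, charFun_map_mul, hP,
        charFun_cauchy, charFun_cauchy, charFun_cauchy, ← Complex.ofReal_mul, ← Real.exp_add]
      congr 2
      rw [abs_mul, abs_mul, abs_mul, abs_of_nonneg (by positivity : 0 ≤ |u| + |v|)]
      ring
    set C := ∫ s, |s| ^ q ∂P with hC
    have hCpos : 0 < C := by
      rw [hC, integral_pos_iff_support_of_nonneg (fun s => by positivity) hint]
      have hs : Function.support (fun s : ℝ => |s| ^ q) = {0}ᶜ := by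
        ext s; simp [hq0.ne']
      have h0 : P {0} = 0 := by
        rw [hP, cauchyMeasure_of_scale_ne_zero 0 one_ne_zero]
        exact withDensity_absolutelyContinuous _ _ (by simp)
      rw [hs, prob_compl_eq_one_sub (measurableSet_singleton _), h0]
      simp
    have key : ∀ u v : ℝ, Integrable (fun p : ℝ × ℝ => |u * p.1 + v * p.2| ^ q) (P.prod P) ∧
        ∫ p, |u * p.1 + v * p.2| ^ q ∂(P.prod P) = (|u| + |v|) ^ q * C := by
      intro u v
      have hm : Measurable (fun s : ℝ => |s| ^ q) := by fun_prop
      have hscale : ∀ s : ℝ, |(|u| + |v|) * s| ^ q = (|u| + |v|) ^ q * |s| ^ q := by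
        intro s
        rw [abs_mul, abs_of_nonneg (by positivity : 0 ≤ |u| + |v|),
          Real.mul_rpow (by positivity) (by positivity)]
      constructor
      · refine (integrable_map_measure (f := fun p : ℝ × ℝ => u * p.1 + v * p.2)
          (μ := P.prod P) hm.aestronglyMeasurable (by fun_prop)).1 ?_
        rw [hmap, integrable_map_measure hm.aestronglyMeasurable (by fun_prop)]
        refine (hint.const_mul ((|u| + |v|) ^ q)).congr (Filter.Eventually.of_forall fun s => ?_)
        exact (hscale s).symm
      · have h := integral_map (φ := fun p : ℝ × ℝ => u * p.1 + v * p.2) (μ := P.prod P)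
          (by fun_prop) (f := fun s => |s| ^ q) hm.aestronglyMeasurable
        rw [← h, hmap, integral_map (by fun_prop) hm.aestronglyMeasurable]
        simp_rw [hscale]
        rw [integral_const_mul]
    refine ⟨ENNReal.ofReal C⁻¹ • P.prod P, fun u v => ⟨(key u v).1.smul_measure (by simp), ?_⟩⟩
    rw [integral_smul_measure, (key u v).2, ENNReal.toReal_ofReal (by positivity), smul_eq_mul]
    field_simp

/-! ### Conditional negative definiteness of `|t| ^ q` -/

theorem integrableOn_one_sub_cos_mul_rpow {q : ℝ} (hq0 : 0 < q) (hq2 : q < 2) (t : ℝ) :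
    IntegrableOn (fun s : ℝ => (1 - Real.cos (t * s)) * s ^ (-1 - q)) (Set.Ioi 0) := by
  have hmeas : Measurable (fun s : ℝ => (1 - Real.cos (t * s)) * s ^ (-1 - q)) := by fun_prop
  rw [← Set.Ioc_union_Ioi_eq_Ioi zero_le_one]
  refine IntegrableOn.union ?_ ?_
  · have h : IntegrableOn (fun s : ℝ => s ^ (1 - q)) (Set.Ioc 0 1) := by
      rw [← intervalIntegrable_iff_integrableOn_Ioc_of_le zero_le_one]
      exact intervalIntegral.intervalIntegrable_rpow' (by linarith)
    refine (h.const_mul (t ^ 2 / 2)).mono' hmeas.aestronglyMeasurable ?_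
    filter_upwards [ae_restrict_mem measurableSet_Ioc] with s hs
    have hs0 : 0 < s := hs.1
    have h1 := Real.one_sub_sq_div_two_le_cos (x := t * s)
    have h2 := Real.cos_le_one (t * s)
    have h3 : s ^ (1 - q) = s ^ 2 * s ^ (-1 - q) := by
      rw [← Real.rpow_natCast, ← Real.rpow_add hs0]; congr 1; push_cast; ring
    rw [Real.norm_of_nonneg (mul_nonneg (by linarith) (by positivity)), h3, ← mul_assoc]
    gcongr
    nlinarith
  · have h : IntegrableOn (fun s : ℝ => s ^ (-1 - q)) (Set.Ioi 1) :=
      integrableOn_Ioi_rpow_of_lt (by linarith) zero_lt_one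
    refine (h.const_mul 2).mono' hmeas.aestronglyMeasurable ?_
    filter_upwards [ae_restrict_mem measurableSet_Ioi] with s hs
    have hs0 : 0 < s := zero_lt_one.trans hs
    have h1 := Real.neg_one_le_cos (t * s)
    have h2 := Real.cos_le_one (t * s)
    rw [Real.norm_of_nonneg (mul_nonneg (by linarith) (by positivity))]
    gcongr
    linarith

theorem integral_one_sub_cos_mul_rpow {q : ℝ} (hq0 : 0 < q) (t : ℝ) :
    ∫ s in Set.Ioi (0 : ℝ), (1 - Real.cos (t * s)) * s ^ (-1 - q) =
      |t| ^ q * ∫ s in Set.Ioi (0 : ℝ), (1 - Real.cos s) * s ^ (-1 - q) := by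
  rcases eq_or_ne t 0 with rfl | ht
  · simp [hq0.ne']
  have ht' : 0 < |t| := abs_pos.2 ht
  have h := integral_comp_mul_left_Ioi (fun s : ℝ => (1 - Real.cos s) * s ^ (-1 - q)) 0 ht'
  rw [mul_zero] at h
  have h2 : ∫ s in Set.Ioi (0 : ℝ), (1 - Real.cos (t * s)) * s ^ (-1 - q) =
      ∫ s in Set.Ioi (0 : ℝ), |t| ^ (1 + q) *
        ((1 - Real.cos (|t| * s)) * (|t| * s) ^ (-1 - q)) := by
    refine setIntegral_congr_fun measurableSet_Ioi fun s hs => ?_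
    have hs0 : 0 < s := hs
    have h3 : |t| ^ (1 + q) * |t| ^ (-1 - q) = 1 := by
      rw [← Real.rpow_add ht']; simp
    have h4 : Real.cos (|t| * s) = Real.cos (t * s) := by
      rw [← Real.cos_abs (t * s), abs_mul, abs_of_pos hs0]
    simp only [h4]
    rw [Real.mul_rpow ht'.le hs0.le]
    linear_combination (-(1 - Real.cos (t * s)) * s ^ (-1 - q)) * h3
  rw [h2, integral_const_mul, h, smul_eq_mul, ← mul_assoc]
  congr 1
  rw [Real.rpow_add ht', Real.rpow_one]
  field_simp

/-- The function `|t| ^ q` is conditionally negative definite on `ℝ`: it is a positive multiple of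
`∫ (1 - cos (t s)) s ^ (-1 - q) ds` over `s > 0`, a mixture of the functions `1 - cos (t s)`. -/
theorem sum_sum_mul_abs_sub_rpow_nonpos {q : ℝ} (hq0 : 0 < q) (hq2 : q < 2)
    {ι : Type*} [Fintype ι] (c t : ι → ℝ) (hc : ∑ i, c i = 0) :
    ∑ i, ∑ j, c i * c j * |t i - t j| ^ q ≤ 0 := by
  set C := ∫ s in Set.Ioi (0 : ℝ), (1 - Real.cos s) * s ^ (-1 - q) with hC
  have hI := fun t => integrableOn_one_sub_cos_mul_rpow hq0 hq2 t
  have hCpos : 0 < C := by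
    have h1 := hI 1
    simp only [one_mul] at h1
    rw [hC, setIntegral_pos_iff_support_of_nonneg_ae _ h1]
    · have hsub : Set.Ioo (0:ℝ) 1 ⊆ Function.support (fun s : ℝ => (1 - Real.cos s) * s ^ (-1 - q))
          ∩ Set.Ioi 0 := by
        intro s hs
        refine ⟨?_, hs.1⟩
        have : Real.cos s < 1 := by
          rw [← Real.cos_zero]
          exact Real.cos_lt_cos_of_nonneg_of_le_pi le_rfl
            (by linarith [hs.2, Real.pi_gt_three]) hs.1
        exact (mul_pos (by linarith) (Real.rpow_pos_of_pos hs.1 _)).ne'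
      refine lt_of_lt_of_le ?_ (measure_mono hsub)
      simp
    · filter_upwards [ae_restrict_mem measurableSet_Ioi] with s hs
      exact mul_nonneg (by linarith [Real.cos_le_one s]) (Real.rpow_nonneg (le_of_lt hs) _)
  have hsum : (∑ i, ∑ j, c i * c j * |t i - t j| ^ q) * C =
      ∫ s in Set.Ioi (0 : ℝ), ∑ i, ∑ j, c i * c j *
        ((1 - Real.cos ((t i - t j) * s)) * s ^ (-1 - q)) := by
    rw [integral_finsetSum _ fun i _ => integrable_finsetSum _ fun j _ => (hI _).const_mul _,
      Finset.sum_mul]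
    refine Finset.sum_congr rfl fun i _ => ?_
    rw [integral_finsetSum _ fun j _ => (hI _).const_mul _, Finset.sum_mul]
    refine Finset.sum_congr rfl fun j _ => ?_
    rw [integral_const_mul, integral_one_sub_cos_mul_rpow hq0, mul_assoc]
  have hle : (∑ i, ∑ j, c i * c j * |t i - t j| ^ q) * C ≤ 0 := by
    rw [hsum]
    refine setIntegral_nonpos measurableSet_Ioi fun s hs => ?_
    have : ∑ i, ∑ j, c i * c j * ((1 - Real.cos ((t i - t j) * s)) * s ^ (-1 - q)) =
        ((∑ i, c i) * (∑ i, c i) - ((∑ i, c i * Real.cos (t i * s)) * (∑ i, c i * Real.cos (t i * s))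
          + (∑ i, c i * Real.sin (t i * s)) * (∑ i, c i * Real.sin (t i * s)))) * s ^ (-1 - q) := by
      rw [Finset.sum_mul_sum, Finset.sum_mul_sum, Finset.sum_mul_sum]
      simp only [← Finset.sum_add_distrib, ← Finset.sum_sub_distrib, Finset.sum_mul]
      refine Finset.sum_congr rfl fun i _ => Finset.sum_congr rfl fun j _ => ?_
      rw [sub_mul (t i), Real.cos_sub]
      ring
    rw [this, hc]
    refine mul_nonpos_of_nonpos_of_nonneg ?_ (Real.rpow_nonneg (le_of_lt hs) _)
    nlinarith [mul_self_nonneg (∑ i, c i * Real.cos (t i * s)),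
      mul_self_nonneg (∑ i, c i * Real.sin (t i * s))]
  exact nonpos_of_mul_nonpos_left hle hCpos

/-! ### Positive definite functions and second differences -/

/-- Conditional negative definiteness of a function on an abelian group, with real coefficients. -/
def IsCondNeg {V : Type*} [AddCommGroup V] (f : V → ℝ) : Prop :=
  ∀ (ι : Type) [Fintype ι] (c : ι → ℝ) (X : ι → V), ∑ i, c i = 0 →
    ∑ i, ∑ j, c i * c j * f (X i - X j) ≤ 0

/-- Positive definiteness of a function on an abelian group, with real coefficients. -/
def IsPosDef {V : Type*} [AddCommGroup V] (f : V → ℝ) : Prop :=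
  ∀ (ι : Type) [Fintype ι] (c : ι → ℝ) (X : ι → V),
    0 ≤ ∑ i, ∑ j, c i * c j * f (X i - X j)

/-- The negative symmetric second difference of `f` in direction `v`. With this sign it preserves
positive definiteness. -/
def secondDiff {V : Type*} [AddCommGroup V] (v : V) (f : V → ℝ) (x : V) : ℝ :=
  2 * f x - f (x + v) - f (x - v)

/-- The quadratic form of a second difference is the quadratic form of the function itself at the
points `X`, `X + v` with coefficients `c`, `-c`, whose total is zero. -/
theorem sum_sum_secondDiff {V : Type*} [AddCommGroup V] (v : V) (f : V → ℝ)
    {ι : Type} [Fintype ι] (c : ι → ℝ) (X : ι → V) :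
    ∑ i, ∑ j, c i * c j * secondDiff v f (X i - X j) =
      ∑ i : ι ⊕ ι, ∑ j : ι ⊕ ι, Sum.elim c (-c) i * Sum.elim c (-c) j *
        f (Sum.elim X (fun k => X k + v) i - Sum.elim X (fun k => X k + v) j) := by
  simp only [Fintype.sum_sum_type, Sum.elim_inl, Sum.elim_inr, ← Finset.sum_add_distrib]
  refine Finset.sum_congr rfl fun i _ => Finset.sum_congr rfl fun j _ => ?_
  rw [secondDiff, show X i + v - (X j + v) = X i - X j by abel,
    show X i - (X j + v) = X i - X j - v by abel, show X i + v - X j = X i - X j + v by abel]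
  simp only [Pi.neg_apply]
  ring

theorem IsCondNeg.posDef_neg_secondDiff {V : Type*} [AddCommGroup V] {f : V → ℝ}
    (hf : IsCondNeg f) (v : V) : IsPosDef (secondDiff v (fun x => - f x)) := by
  intro ι _ c X
  have h := hf (ι ⊕ ι) (Sum.elim c (-c)) (Sum.elim X (fun k => X k + v)) (by simp)
  rw [sum_sum_secondDiff]
  simp only [mul_neg, Finset.sum_neg_distrib]
  linarith

theorem IsPosDef.secondDiff {V : Type*} [AddCommGroup V] {f : V → ℝ}
    (hf : IsPosDef f) (v : V) : IsPosDef (secondDiff v f) := by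
  intro ι _ c X
  rw [sum_sum_secondDiff]
  exact hf _ _ _

/-- Positive definiteness tested on the combs `{l • p}` and `{(K + k) • p + e}`, `0 ≤ k, l < K`, with
coefficient `1` on the first and `±1` on the second. -/
theorem IsPosDef.abs_cross_le {V : Type*} [AddCommGroup V] {h : V → ℝ} (hh : IsPosDef h)
    (heven : ∀ x, h (-x) = h x) (p e : V) (K : ℕ) :
    |∑ k : Fin K, ∑ l : Fin K, h (((K + k - l : ℤ)) • p + e)| ≤
      ∑ k : Fin K, ∑ l : Fin K, h ((k - l : ℤ) • p) := by
  have key : ∀ s : ℝ, s ^ 2 = 1 → 0 ≤ 2 * (∑ k : Fin K, ∑ l : Fin K, h ((k - l : ℤ) • p)) +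
      2 * s * ∑ k : Fin K, ∑ l : Fin K, h (((K + k - l : ℤ)) • p + e) := by
    intro s hs
    have H := hh (Fin K ⊕ Fin K) (Sum.elim (fun _ => 1) (fun _ => s))
      (Sum.elim (fun l => (l : ℤ) • p) (fun k => (K + k : ℤ) • p + e))
    simp only [Fintype.sum_sum_type, Sum.elim_inl, Sum.elim_inr, Finset.sum_add_distrib] at H
    have h1 : ∀ i j : Fin K, (i : ℤ) • p - (j : ℤ) • p = (i - j : ℤ) • p := fun i j => by
      rw [sub_smul]
    have h2 : ∀ i j : Fin K, h ((i : ℤ) • p - ((K + j : ℤ) • p + e)) =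
        h ((K + j - i : ℤ) • p + e) := fun i j => by
      rw [← heven]; congr 1; module
    have h3 : ∀ i j : Fin K, (K + i : ℤ) • p + e - (j : ℤ) • p = (K + i - j : ℤ) • p + e :=
      fun i j => by module
    have h4 : ∀ i j : Fin K, (K + i : ℤ) • p + e - ((K + j : ℤ) • p + e) = (i - j : ℤ) • p :=
      fun i j => by module
    simp only [h1, h2, h3, h4, ← Finset.mul_sum] at H
    rw [Finset.sum_comm (f := fun i j : Fin K => h ((K + j - i : ℤ) • p + e))] at H
    rw [← sq s, hs] at H
    linarith
  have h1 := key 1 (by norm_num)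
  have h2 := key (-1) (by norm_num)
  rw [abs_le]
  constructor <;> linarith

/-! ### The obstruction in four integer variables -/

theorem rpow_midpoint_concave {q : ℝ} (hq0 : 0 < q) (hq1 : q ≤ 1) {r : ℝ} (hr : 1 ≤ r) :
    (r - 1) ^ q + (r + 1) ^ q ≤ 2 * r ^ q := by
  have hm1 : r - 1 ∈ Set.Ici (0 : ℝ) := by simpa using hr
  have hp1 : r + 1 ∈ Set.Ici (0 : ℝ) := by simp only [Set.mem_Ici]; linarith
  have hhalf : (0 : ℝ) ≤ 1 / 2 := by norm_num
  have h := (Real.concaveOn_rpow hq0.le hq1).2 hm1 hp1 hhalf hhalf (by norm_num)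
  simp only [smul_eq_mul] at h
  rw [show 1 / 2 * (r - 1) + 1 / 2 * (r + 1) = r by ring] at h
  linarith

theorem mul_rpow_sub_one_le_rpow_sub_rpow {q : ℝ} (hq0 : 0 < q) (hq1 : q ≤ 1) {r : ℝ}
    (hr : 0 < r) : q * (r + 1) ^ (q - 1) ≤ (r + 1) ^ q - r ^ q := by
  have hR : 0 < r + 1 := by linarith
  have h := rpow_one_add_le_one_add_mul_self (s := -(1 / (r + 1)))
    (by rw [neg_le_neg_iff, div_le_one hR]; linarith) hq0.le hq1
  rw [show 1 + -(1 / (r + 1)) = r / (r + 1) by field_simp; ring, Real.div_rpow hr.le hR.le,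
    div_le_iff₀ (by positivity)] at h
  rw [Real.rpow_sub_one hR.ne']
  have : (1 + q * -(1 / (r + 1))) * (r + 1) ^ q = (r + 1) ^ q - q * ((r + 1) ^ q / (r + 1)) := by
    field_simp
    ring
  linarith

/-- By concavity each term is at most the drop of the increment `r ^ q - (r - 1) ^ q` between
consecutive multiples of `4`, so the series is dominated by a telescoping one. -/
theorem summable_secondDiff_rpow {q : ℝ} (hq0 : 0 < q) (hq1 : q ≤ 1) :
    Summable fun d : ℕ => 2 * (4 * (d + 1 : ℝ)) ^ q - (4 * (d + 1 : ℝ) - 1) ^ q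
      - (4 * (d + 1 : ℝ) + 1) ^ q := by
  -- increments of the concave function `r ^ q` along the integers
  set g : ℝ → ℝ := fun r => r ^ q - (r - 1) ^ q with hg
  have hanti : ∀ r : ℝ, 1 ≤ r → g (r + 1) ≤ g r := by
    intro r hr
    have := rpow_midpoint_concave hq0 hq1 hr
    simp only [hg, add_sub_cancel_right]
    linarith
  have hnn : ∀ r : ℝ, 1 ≤ r → 0 ≤ g r := by
    intro r hr
    simp only [hg, sub_nonneg]
    exact Real.rpow_le_rpow (by linarith) (by linarith) hq0.le
  refine summable_of_sum_range_le (c := g 4) (fun d => ?_) (fun m => ?_)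
  · have hd : (0:ℝ) ≤ d := d.cast_nonneg
    have := rpow_midpoint_concave hq0 hq1 (r := 4 * (d + 1 : ℝ)) (by linarith)
    linarith
  · have : ∀ m : ℕ, ∑ d ∈ Finset.range m, (2 * (4 * (d + 1 : ℝ)) ^ q - (4 * (d + 1 : ℝ) - 1) ^ q
        - (4 * (d + 1 : ℝ) + 1) ^ q) ≤ g 4 - g (4 * (m + 1 : ℝ)) := by
      intro m
      induction m with
      | zero => simp
      | succ m ih =>
        rw [Finset.sum_range_succ]
        have hm : (0:ℝ) ≤ m := m.cast_nonneg
        have h1 := hanti (4 * (m + 1 : ℝ) + 1) (by linarith)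
        have h2 := hanti (4 * (m + 1 : ℝ) + 2) (by linarith)
        have h3 := hanti (4 * (m + 1 : ℝ) + 3) (by linarith)
        have e0 : 2 * (4 * (m + 1 : ℝ)) ^ q - (4 * (m + 1 : ℝ) - 1) ^ q
          - (4 * (m + 1 : ℝ) + 1) ^ q = g (4 * (m + 1 : ℝ)) - g (4 * (m + 1 : ℝ) + 1) := by
          simp only [hg, add_sub_cancel_right]; ring
        rw [e0]
        rw [show 4 * (m + 1 : ℝ) + 1 + 1 = 4 * (m + 1 : ℝ) + 2 by ring] at h1
        rw [show 4 * (m + 1 : ℝ) + 2 + 1 = 4 * (m + 1 : ℝ) + 3 by ring] at h2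
        rw [show 4 * (m + 1 : ℝ) + 3 + 1 = 4 * ((m + 1 : ℕ) + 1 : ℝ) by push_cast; ring] at h3
        linarith
    have h := this m
    have := hnn (4 * (m + 1 : ℝ)) (by have : (0:ℝ) ≤ m := m.cast_nonneg
                                      linarith)
    linarith

/-- If a conditionally negative definite even function on `ℤ⁴` is, near the ray `(d, 0, 0, 0)`, a
combination of a function of `d`, the powers of `4d + uᵢ` and of `4d + max uᵢ uⱼ`, and
`c (4d + max u₁ u₂ u₃) ^ q`, then `c = 0`: the triple second difference kills all but the last term.
-/
theorem coeff_eq_zero_of_isCondNeg {q : ℝ} (hq0 : 0 < q) (hq1 : q ≤ 1)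
    {M : ℤ × ℤ × ℤ × ℤ → ℝ} (hM : IsCondNeg M) (heven : ∀ x, M (-x) = M x)
    (A : ℤ → ℝ) (β γ c : ℝ)
    (hloc : ∀ d u₁ u₂ u₃ : ℤ, 1 ≤ d → |u₁| ≤ 2 → |u₂| ≤ 2 → |u₃| ≤ 2 →
      M (d, u₁, u₂, u₃) = A d
        + β * ((4 * d + u₁ : ℝ) ^ q + (4 * d + u₂ : ℝ) ^ q + (4 * d + u₃ : ℝ) ^ q)
        + γ * ((4 * d + (max u₁ u₂ : ℤ) : ℝ) ^ q + (4 * d + (max u₁ u₃ : ℤ) : ℝ) ^ q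
          + (4 * d + (max u₂ u₃ : ℤ) : ℝ) ^ q)
        + c * (4 * d + (max u₁ (max u₂ u₃) : ℤ) : ℝ) ^ q) : c = 0 := by
  set e₁ : ℤ × ℤ × ℤ × ℤ := (0, 1, 0, 0) with he₁
  set H : ℤ × ℤ × ℤ × ℤ → ℝ :=
    secondDiff e₁ (secondDiff (0, 0, 1, 0) (secondDiff (0, 0, 0, 1) fun x => -M x)) with hH
  have hpd : IsPosDef H := ((hM.posDef_neg_secondDiff _).secondDiff _).secondDiff _
  have hsd : ∀ (v : ℤ × ℤ × ℤ × ℤ) (f : ℤ × ℤ × ℤ × ℤ → ℝ), (∀ x, f (-x) = f x) →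
      ∀ x, secondDiff v f (-x) = secondDiff v f x := by
    intro v f hf x
    rw [secondDiff, secondDiff, hf, ← hf (-x + v), ← hf (-x - v),
      show -(-x + v) = x - v by abel, show -(-x - v) = x + v by abel]
    ring
  have hHeven : ∀ x, H (-x) = H x :=
    hsd _ _ (hsd _ _ (hsd _ _ fun x => by rw [heven]))
  have hH0 : ∀ d : ℤ, 1 ≤ d → H (d, 0, 0, 0) =
      -c * (2 * (4 * d : ℝ) ^ q - (4 * d - 1 : ℝ) ^ q - (4 * d + 1 : ℝ) ^ q) := by
    intro d hd
    simp only [hH, he₁, secondDiff, Prod.mk_add_mk, Prod.mk_sub_mk, add_zero, sub_zero, zero_add,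
      zero_sub]
    simp (discharger := norm_num) only [hloc d _ _ _ hd]
    norm_num
    ring_nf
  have hH1 : ∀ d : ℤ, 1 ≤ d → H (d, 1, 0, 0) =
      -c * ((4 * d + 1 : ℝ) ^ q - (4 * d : ℝ) ^ q) := by
    intro d hd
    simp only [hH, he₁, secondDiff, Prod.mk_add_mk, Prod.mk_sub_mk, add_zero, sub_zero, zero_add,
      zero_sub, sub_self, one_add_one_eq_two]
    simp (discharger := norm_num) only [hloc d _ _ _ hd]
    norm_num
    ring_nf
  have hsum : Summable fun d : ℤ => |H (d, 0, 0, 0)| := by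
    have hnat : Summable fun d : ℕ => |H (((d + 1 : ℕ) : ℤ), 0, 0, 0)| := by
      have h := ((summable_secondDiff_rpow hq0 hq1).mul_left (-c)).abs
      refine h.congr fun d => ?_
      rw [hH0 _ (by omega)]
      push_cast
      rfl
    have hnat' : Summable fun d : ℕ => |H ((d : ℤ), 0, 0, 0)| := (summable_nat_add_iff 1).1 hnat
    refine Summable.of_nat_of_neg hnat' (hnat'.congr fun d => ?_)
    rw [← hHeven]
    simp
  set S := ∑' d : ℤ, |H (d, 0, 0, 0)| with hS
  -- the two combs of length `K`: the cross terms exceed a multiple of `|c| K ^ (1 + q)`, the diagonal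
  -- terms are at most `K S`
  have hbound : ∀ K : ℕ, 1 ≤ K → |c| * (q * 8 ^ (q - 1)) * (K : ℝ) ^ q ≤ S := by
    intro K hK
    have hK0 : (0:ℝ) < K := by exact_mod_cast hK
    have h := hpd.abs_cross_le hHeven (1, 0, 0, 0) e₁ K
    have hdiag : ∑ k : Fin K, ∑ l : Fin K, H ((k - l : ℤ) • (1, 0, 0, 0)) ≤ K * S := by
      have : ∀ k : Fin K, ∑ l : Fin K, H ((k - l : ℤ) • (1, 0, 0, 0)) ≤ S := by
        intro k
        have hinj : Function.Injective (fun l : Fin K => (k - l : ℤ)) := by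
          intro l l' hl
          have : (k - l : ℤ) = k - l' := hl
          ext; omega
        calc ∑ l : Fin K, H ((k - l : ℤ) • (1, 0, 0, 0))
            ≤ ∑ l : Fin K, |H ((k - l : ℤ), 0, 0, 0)| := by
              refine Finset.sum_le_sum fun l _ => ?_
              simp only [Prod.smul_mk, smul_eq_mul, mul_one, mul_zero]
              exact le_abs_self _
          _ = ∑ d ∈ Finset.univ.map ⟨_, hinj⟩, |H (d, 0, 0, 0)| := by
              rw [Finset.sum_map]; rfl
          _ ≤ S := hsum.sum_le_tsum _ fun _ _ => abs_nonneg _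
      calc _ ≤ ∑ k : Fin K, S := Finset.sum_le_sum fun k _ => this k
        _ = K * S := by simp
    have hcross : |c| * (K * (K * (q * (8 * K) ^ (q - 1)))) ≤
        |∑ k : Fin K, ∑ l : Fin K, H (((K + k - l : ℤ)) • (1, 0, 0, 0) + e₁)| := by
      have : ∀ k l : Fin K, H (((K + k - l : ℤ)) • (1, 0, 0, 0) + e₁) =
          -c * ((4 * (K + k - l : ℤ) + 1 : ℝ) ^ q - (4 * (K + k - l : ℤ) : ℝ) ^ q) := by
        intro k l
        rw [← hH1 _ (by have := l.2; omega)]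
        simp [he₁]
      simp only [this, ← Finset.mul_sum]
      rw [abs_mul, abs_neg]
      refine mul_le_mul_of_nonneg_left ?_ (abs_nonneg c)
      refine le_trans ?_ (le_abs_self _)
      calc (K * (K * (q * (8 * K) ^ (q - 1))) : ℝ)
          = ∑ k : Fin K, ∑ l : Fin K, q * (8 * K : ℝ) ^ (q - 1) := by simp
        _ ≤ _ := by
          refine Finset.sum_le_sum fun k _ => Finset.sum_le_sum fun l _ => ?_
          have h1 : (1 : ℤ) ≤ K + k - l := by have := l.2; omega
          have h2 : 4 * (K + k - l : ℤ) + 1 ≤ 8 * (K : ℤ) := by have := k.2; omega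
          have h1' : (1 : ℝ) ≤ (K + k - l : ℤ) := by exact_mod_cast h1
          have h2' : (4 * (K + k - l : ℤ) + 1 : ℝ) ≤ 8 * K := by exact_mod_cast h2
          refine le_trans ?_ (mul_rpow_sub_one_le_rpow_sub_rpow hq0 hq1 (by linarith))
          refine mul_le_mul_of_nonneg_left ?_ hq0.le
          exact Real.rpow_le_rpow_of_nonpos (by linarith) h2' (by linarith)
    have hfin := hcross.trans (h.trans hdiag)
    rw [Real.mul_rpow (by norm_num) hK0.le, Real.rpow_sub_one hK0.ne'] at hfin
    have : |c| * (K * (K * (q * (8 ^ (q - 1) * ((K : ℝ) ^ q / K))))) =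
        K * (|c| * (q * 8 ^ (q - 1)) * (K : ℝ) ^ q) := by
      field_simp
    rw [this] at hfin
    exact le_of_mul_le_mul_left hfin hK0
  by_contra hc
  have hpos : 0 < |c| * (q * 8 ^ (q - 1)) := by positivity
  have htend : Filter.Tendsto (fun K : ℕ => |c| * (q * 8 ^ (q - 1)) * (K : ℝ) ^ q)
      Filter.atTop Filter.atTop :=
    ((tendsto_rpow_atTop hq0).comp tendsto_natCast_atTop_atTop).const_mul_atTop hpos
  obtain ⟨K, hK, hK1⟩ :=
    ((htend.eventually_gt_atTop S).and (Filter.eventually_ge_atTop 1)).exists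
  exact absurd (hbound K hK1) (not_le.2 hK)

/-! ### The Lorentz functional -/

/-- The functional `‖x‖_{w,q} ^ q` of the Lorentz space with weights `a 1, …, a n`. -/
noncomputable def lorentz {n : ℕ} (a : ℕ → ℝ) (q : ℝ) (x : Fin n → ℝ) : ℝ :=
  ∑ i : Fin n, a (i.1 + 1) * dstar x i ^ q

theorem dstar_nonneg {n : ℕ} (x : Fin n → ℝ) (i : Fin n) : 0 ≤ dstar x i := abs_nonneg _

theorem dstar_antitone {n : ℕ} (x : Fin n → ℝ) : Antitone (dstar x) := by
  intro i j hij
  have h := Tuple.monotone_sort (fun j => -|x j|) hij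
  simp only [Function.comp_apply] at h
  exact neg_le_neg_iff.1 h

theorem dstar_comp_perm {n : ℕ} (x : Fin n → ℝ) (σ : Equiv.Perm (Fin n)) :
    dstar (x ∘ σ) = dstar x := by
  have h := Tuple.comp_perm_comp_sort_eq_comp_sort (f := fun j => -|x j|) (σ := σ)
  funext i
  exact neg_injective (congrFun h i)

theorem dstar_neg {n : ℕ} (x : Fin n → ℝ) : dstar (-x) = dstar x := by
  funext i
  simp [dstar]

theorem dstar_of_antitone {n : ℕ} {x : Fin n → ℝ} (h0 : ∀ i, 0 ≤ x i) (hx : Antitone x) :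
    dstar x = x := by
  have h : Tuple.sort (fun j => -|x j|) = Equiv.refl _ := by
    rw [Tuple.sort_eq_refl_iff_monotone]
    intro i j hij
    simp only [abs_of_nonneg (h0 _)]
    exact neg_le_neg (hx hij)
  funext i
  simp [dstar, h, abs_of_nonneg (h0 i)]

theorem lorentz_nonneg {n : ℕ} {a : ℕ → ℝ} (ha : ∀ i, 1 ≤ i → i ≤ n → 0 ≤ a i) (q : ℝ)
    (x : Fin n → ℝ) : 0 ≤ lorentz a q x :=
  Finset.sum_nonneg fun i _ => mul_nonneg (ha _ (by omega) (by omega))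
    (Real.rpow_nonneg (dstar_nonneg x i) q)

theorem lorentz_pos {n : ℕ} {a : ℕ → ℝ} (ha : ∀ i, 1 ≤ i → i ≤ n → 0 ≤ a i) (ha1 : 0 < a 1) (q : ℝ)
    {x : Fin n → ℝ} (hx : x ≠ 0) : 0 < lorentz a q x := by
  obtain ⟨k, hk⟩ := Function.ne_iff.1 hx
  have hn : 0 < n := k.pos
  set o : Fin n := ⟨0, hn⟩
  have h0 : 0 < dstar x o := by
    obtain ⟨i, hi⟩ := (Tuple.sort (fun j => -|x j|)).surjective k
    have hi' : dstar x i = |x k| := by simp [dstar, hi]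
    have : dstar x i ≤ dstar x o := dstar_antitone x (Fin.mk_le_of_le_val (Nat.zero_le _))
    rw [hi'] at this
    exact (abs_pos.2 hk).trans_le this
  refine Finset.sum_pos' (fun i _ => mul_nonneg (ha _ (by omega) (by omega))
    (Real.rpow_nonneg (dstar_nonneg x i) q)) ⟨o, Finset.mem_univ _, ?_⟩
  exact mul_pos ha1 (Real.rpow_pos_of_pos h0 q)

/-! ### Necessity -/

/-- A function of the form `∫ |T x| ^ q` with `T` linear is conditionally negative definite. -/
theorem sum_sum_integral_nonpos {q : ℝ} (hq0 : 0 < q) (hq2 : q < 2) {E Ω : Type*} [AddCommGroup E]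
    [Module ℝ E] [MeasurableSpace Ω] {μ : Measure Ω} (T : E →ₗ[ℝ] (Ω → ℝ))
    (hT : ∀ x, Integrable (fun ω => |T x ω| ^ q) μ) {ι : Type*} [Fintype ι] (c : ι → ℝ)
    (X : ι → E) (hc : ∑ i, c i = 0) :
    ∑ i, ∑ j, c i * c j * ∫ ω, |T (X i - X j) ω| ^ q ∂μ ≤ 0 := by
  have h : ∑ i, ∑ j, c i * c j * ∫ ω, |T (X i - X j) ω| ^ q ∂μ =
      ∫ ω, ∑ i, ∑ j, c i * c j * |T (X i - X j) ω| ^ q ∂μ := by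
    rw [integral_finsetSum _ fun i _ => integrable_finsetSum _ fun j _ => (hT _).const_mul _]
    refine Finset.sum_congr rfl fun i _ => ?_
    rw [integral_finsetSum _ fun j _ => (hT _).const_mul _]
    exact Finset.sum_congr rfl fun j _ => (integral_const_mul _ _).symm
  rw [h]
  refine integral_nonpos fun ω => ?_
  simp only [map_sub, Pi.sub_apply, Pi.zero_apply]
  exact sum_sum_mul_abs_sub_rpow_nonpos hq0 hq2 c (fun i => T (X i) ω) hc

/-- The vector `(8d, …, 8d, 4d + u₁, 4d + u₂, 4d + u₃, 0, …, 0)` with `k` leading entries `8d`. For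
`d ≥ 1` and `|uᵢ| ≤ 2` its three blocks keep their order under rearrangement. -/
def testVec (n k : ℕ) (z : ℤ × ℤ × ℤ × ℤ) : Fin n → ℝ := fun j =>
  if j.1 < k then 8 * z.1
  else if j.1 = k then 4 * z.1 + z.2.1
  else if j.1 = k + 1 then 4 * z.1 + z.2.2.1
  else if j.1 = k + 2 then 4 * z.1 + z.2.2.2
  else 0

theorem testVec_sub (n k : ℕ) (z z' : ℤ × ℤ × ℤ × ℤ) :
    testVec n k (z - z') = testVec n k z - testVec n k z' := by
  funext j
  simp only [testVec, Pi.sub_apply, Prod.fst_sub, Prod.snd_sub, Int.cast_sub]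
  split_ifs <;> ring

theorem testVec_neg (n k : ℕ) (z : ℤ × ℤ × ℤ × ℤ) : testVec n k (-z) = -testVec n k z := by
  funext j
  simp only [testVec, Pi.neg_apply, Prod.fst_neg, Prod.snd_neg, Int.cast_neg]
  split_ifs <;> ring

theorem lorentz_testVec_swap₁₂ {n k : ℕ} (hk : k + 2 < n) (a : ℕ → ℝ) (q : ℝ) (d u₁ u₂ u₃ : ℤ) :
    lorentz a q (testVec n k (d, u₂, u₁, u₃)) = lorentz a q (testVec n k (d, u₁, u₂, u₃)) := by
  have h : testVec n k (d, u₂, u₁, u₃) = testVec n k (d, u₁, u₂, u₃) ∘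
      Equiv.swap (⟨k, by omega⟩ : Fin n) ⟨k + 1, by omega⟩ := by
    funext j
    simp only [testVec, Function.comp_apply, Equiv.swap_apply_def, Fin.ext_iff]
    grind
  rw [lorentz, h, dstar_comp_perm, lorentz]

theorem lorentz_testVec_swap₂₃ {n k : ℕ} (hk : k + 2 < n) (a : ℕ → ℝ) (q : ℝ) (d u₁ u₂ u₃ : ℤ) :
    lorentz a q (testVec n k (d, u₁, u₃, u₂)) = lorentz a q (testVec n k (d, u₁, u₂, u₃)) := by
  have h : testVec n k (d, u₁, u₃, u₂) = testVec n k (d, u₁, u₂, u₃) ∘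
      Equiv.swap (⟨k + 1, by omega⟩ : Fin n) ⟨k + 2, by omega⟩ := by
    funext j
    simp only [testVec, Function.comp_apply, Equiv.swap_apply_def, Fin.ext_iff]
    grind
  rw [lorentz, h, dstar_comp_perm, lorentz]

theorem lorentz_testVec_of_le {n k : ℕ} (hk : k + 2 < n) (a : ℕ → ℝ) {q : ℝ} (hq0 : 0 < q)
    {d u₁ u₂ u₃ : ℤ} (hd : 1 ≤ d) (h₁ : |u₁| ≤ 2) (h₃ : |u₃| ≤ 2)
    (h₁₂ : u₂ ≤ u₁) (h₂₃ : u₃ ≤ u₂) :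
    lorentz a q (testVec n k (d, u₁, u₂, u₃)) =
      (∑ j ∈ Finset.range k, a (j + 1) * (8 * d : ℝ) ^ q) + a (k + 1) * (4 * d + u₁ : ℝ) ^ q
        + a (k + 2) * (4 * d + u₂ : ℝ) ^ q + a (k + 3) * (4 * d + u₃ : ℝ) ^ q := by
  rw [abs_le] at h₁ h₃
  have hd' : (1 : ℝ) ≤ d := by exact_mod_cast hd
  have h₁' : (u₁ : ℝ) ≤ 2 := by exact_mod_cast h₁.2
  have h₃' : (-2 : ℝ) ≤ u₃ := by exact_mod_cast h₃.1
  have h₁₂' : (u₂ : ℝ) ≤ u₁ := by exact_mod_cast h₁₂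
  have h₂₃' : (u₃ : ℝ) ≤ u₂ := by exact_mod_cast h₂₃
  have hs : dstar (testVec n k (d, u₁, u₂, u₃)) = testVec n k (d, u₁, u₂, u₃) := by
    refine dstar_of_antitone (fun j => ?_) (fun i j hij => ?_)
    · simp only [testVec]
      split_ifs <;> linarith
    · have hij' : i.1 ≤ j.1 := hij
      simp only [testVec]
      split_ifs <;> first | linarith | omega
  obtain ⟨m, rfl⟩ : ∃ m, n = k + (3 + m) := ⟨n - k - 3, by omega⟩
  rw [lorentz, hs]
  have hr := Fin.sum_univ_eq_sum_range (fun j => a (j + 1) * (if j < k then 8 * (d : ℝ)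
    else if j = k then 4 * d + u₁ else if j = k + 1 then 4 * d + u₂
    else if j = k + 2 then 4 * d + u₃ else 0) ^ q) (k + (3 + m))
  simp only [testVec]
  rw [hr, Finset.sum_range_add, Finset.sum_range_add]
  have e1 : ∑ j ∈ Finset.range k, a (j + 1) * (if j < k then 8 * (d : ℝ)
      else if j = k then 4 * d + u₁ else if j = k + 1 then 4 * d + u₂
      else if j = k + 2 then 4 * d + u₃ else 0) ^ q =
      ∑ j ∈ Finset.range k, a (j + 1) * (8 * d : ℝ) ^ q :=
    Finset.sum_congr rfl fun j hj => by rw [if_pos (Finset.mem_range.1 hj)]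
  have e2 : ∀ x ∈ Finset.range m, a (k + (3 + x) + 1) * (if k + (3 + x) < k then 8 * (d : ℝ)
      else if k + (3 + x) = k then 4 * d + u₁ else if k + (3 + x) = k + 1 then 4 * d + u₂
      else if k + (3 + x) = k + 2 then 4 * d + u₃ else 0) ^ q = 0 := by
    intro x _
    rw [if_neg (by omega), if_neg (by omega), if_neg (by omega), if_neg (by omega),
      Real.zero_rpow hq0.ne', mul_zero]
  rw [e1, Finset.sum_eq_zero e2]
  simp [Finset.sum_range_succ]
  ring

/-- On the test vectors the Lorentz functional is a combination of one-, two- and three-variable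
maxima, and the three-variable term carries the second difference of the weights. -/
theorem lorentz_testVec {n k : ℕ} (hk : k + 2 < n) (a : ℕ → ℝ) {q : ℝ} (hq0 : 0 < q)
    (d u₁ u₂ u₃ : ℤ) (hd : 1 ≤ d) (h₁ : |u₁| ≤ 2) (h₂ : |u₂| ≤ 2) (h₃ : |u₃| ≤ 2) :
    lorentz a q (testVec n k (d, u₁, u₂, u₃)) =
      (∑ j ∈ Finset.range k, a (j + 1) * (8 * d : ℝ) ^ q)
        + a (k + 3) * ((4 * d + u₁ : ℝ) ^ q + (4 * d + u₂ : ℝ) ^ q + (4 * d + u₃ : ℝ) ^ q)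
        + (a (k + 2) - a (k + 3)) * ((4 * d + (max u₁ u₂ : ℤ) : ℝ) ^ q
          + (4 * d + (max u₁ u₃ : ℤ) : ℝ) ^ q + (4 * d + (max u₂ u₃ : ℤ) : ℝ) ^ q)
        + (a (k + 1) - 2 * a (k + 2) + a (k + 3)) *
          (4 * d + (max u₁ (max u₂ u₃) : ℤ) : ℝ) ^ q := by
  have s₁ := fun u₁ u₂ u₃ => lorentz_testVec_swap₁₂ hk a q d u₁ u₂ u₃
  have s₂ := fun u₁ u₂ u₃ => lorentz_testVec_swap₂₃ hk a q d u₁ u₂ u₃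
  rcases le_total u₁ u₂ with h12 | h12 <;> rcases le_total u₁ u₃ with h13 | h13 <;>
    rcases le_total u₂ u₃ with h23 | h23
  · -- `u₁ ≤ u₂ ≤ u₃`
    rw [s₁ u₂ u₁ u₃, s₂ u₂ u₃ u₁, s₁ u₃ u₂ u₁, lorentz_testVec_of_le hk a hq0 hd h₃ h₁ h23 h12]
    simp only [max_eq_right h12, max_eq_right h13, max_eq_right h23]
    ring
  · rw [s₁ u₂ u₁ u₃, s₂ u₂ u₃ u₁, lorentz_testVec_of_le hk a hq0 hd h₂ h₁ h23 h13]
    simp only [max_eq_right h12, max_eq_right h13, max_eq_left h23]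
    ring
  · -- this order forces all three to coincide
    obtain rfl : u₁ = u₂ := by omega
    obtain rfl : u₁ = u₃ := by omega
    rw [lorentz_testVec_of_le hk a hq0 hd h₁ h₁ le_rfl le_rfl]
    simp only [max_self]
    ring
  · rw [s₁ u₂ u₁ u₃, lorentz_testVec_of_le hk a hq0 hd h₂ h₃ h12 h13]
    simp only [max_eq_right h12, max_eq_left h13, max_eq_left h23]
    ring
  · rw [s₂ u₁ u₃ u₂, s₁ u₃ u₁ u₂, lorentz_testVec_of_le hk a hq0 hd h₃ h₂ h13 h12]
    simp only [max_eq_left h12, max_eq_right h13, max_eq_right h23]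
    ring
  · obtain rfl : u₁ = u₂ := by omega
    obtain rfl : u₁ = u₃ := by omega
    rw [lorentz_testVec_of_le hk a hq0 hd h₁ h₁ le_rfl le_rfl]
    simp only [max_self]
    ring
  · rw [s₂ u₁ u₃ u₂, lorentz_testVec_of_le hk a hq0 hd h₁ h₂ h13 h23]
    simp only [max_eq_left h12, max_eq_left h13, max_eq_right h23]
    ring
  · rw [lorentz_testVec_of_le hk a hq0 hd h₁ h₃ h12 h23]
    simp only [max_eq_left h12, max_eq_left h13, max_eq_left h23]
    ring

/-- Necessity: an embedding into `L_q` forces every second difference of the weights to vanish. -/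
theorem weights_of_integral_eq_lorentz {n : ℕ} {q : ℝ} (hq0 : 0 < q) (hq1 : q ≤ 1) {a : ℕ → ℝ}
    (ha : ∀ i, 1 ≤ i → i ≤ n → 0 ≤ a i) (ha1 : 0 < a 1)
    {Ω : Type*} [MeasurableSpace Ω] {μ : Measure Ω} (T : (Fin n → ℝ) →ₗ[ℝ] (Ω → ℝ))
    (hT : ∀ x, ∫ ω, |T x ω| ^ q ∂μ = lorentz a q x) {k : ℕ} (hk : k + 2 < n) :
    a (k + 1) - 2 * a (k + 2) + a (k + 3) = 0 := by
  -- the integral is positive at `x ≠ 0`, hence not a junk value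
  have hint : ∀ x, Integrable (fun ω => |T x ω| ^ q) μ := by
    intro x
    rcases eq_or_ne x 0 with rfl | hx
    · simp [Real.zero_rpow hq0.ne']
    · exact .of_integral_ne_zero (by rw [hT]; exact (lorentz_pos ha ha1 q hx).ne')
  refine coeff_eq_zero_of_isCondNeg hq0 hq1 (M := fun z => lorentz a q (testVec n k z))
    (fun ι _ c X hc => ?_) (fun z => ?_)
    (fun d => ∑ j ∈ Finset.range k, a (j + 1) * (8 * d : ℝ) ^ q) (a (k + 3))
    (a (k + 2) - a (k + 3)) _ (fun d u₁ u₂ u₃ => lorentz_testVec hk a hq0 d u₁ u₂ u₃)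
  · simp only [testVec_sub, ← hT]
    exact sum_sum_integral_nonpos hq0 (by linarith) T hint c (fun i => testVec n k (X i)) hc
  · simp only [testVec_neg, lorentz, dstar_neg]

/-! ### Sufficiency -/

/-- A function on `ℝⁿ` of the form `x ↦ ∫ |⟨ξ, x⟩| ^ q dμ(ξ)`: the `q`-th power of the (quasi)norm
of a subspace of `L_q`. -/
def IsLqRep {n : ℕ} (q : ℝ) (F : (Fin n → ℝ) → ℝ) : Prop :=
  ∃ μ : Measure (Fin n → ℝ), ∀ x,
    Integrable (fun ξ : Fin n → ℝ => |∑ i, ξ i * x i| ^ q) μ ∧ ∫ ξ, |∑ i, ξ i * x i| ^ q ∂μ = F x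

theorem IsLqRep.zero {n : ℕ} {q : ℝ} : IsLqRep (n := n) q (fun _ => 0) :=
  ⟨0, fun _ => ⟨integrable_zero_measure, integral_zero_measure _⟩⟩

theorem IsLqRep.add {n : ℕ} {q : ℝ} {F G : (Fin n → ℝ) → ℝ} (hF : IsLqRep q F) (hG : IsLqRep q G) :
    IsLqRep q (fun x => F x + G x) := by
  obtain ⟨μ, hμ⟩ := hF
  obtain ⟨ν, hν⟩ := hG
  refine ⟨μ + ν, fun x => ⟨(hμ x).1.add_measure (hν x).1, ?_⟩⟩
  rw [integral_add_measure (hμ x).1 (hν x).1, (hμ x).2, (hν x).2]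

theorem IsLqRep.const_mul {n : ℕ} {q : ℝ} {F : (Fin n → ℝ) → ℝ} (hF : IsLqRep q F) {c : ℝ}
    (hc : 0 ≤ c) : IsLqRep q (fun x => c * F x) := by
  obtain ⟨μ, hμ⟩ := hF
  refine ⟨ENNReal.ofReal c • μ, fun x => ⟨(hμ x).1.smul_measure (by simp), ?_⟩⟩
  rw [integral_smul_measure, (hμ x).2, ENNReal.toReal_ofReal hc, smul_eq_mul]

theorem IsLqRep.sum {n : ℕ} {q : ℝ} {ι : Type*} (s : Finset ι) {F : ι → (Fin n → ℝ) → ℝ}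
    (hF : ∀ i ∈ s, IsLqRep q (F i)) : IsLqRep q (fun x => ∑ i ∈ s, F i x) := by
  classical
  induction s using Finset.induction_on with
  | empty => simpa using IsLqRep.zero
  | insert i s hi ih =>
    simp only [Finset.sum_insert hi]
    exact (hF i (Finset.mem_insert_self i s)).add
      (ih fun j hj => hF j (Finset.mem_insert_of_mem hj))

theorem isLqRep_abs_rpow {n : ℕ} (q : ℝ) (i : Fin n) : IsLqRep q (fun x => |x i| ^ q) := by
  refine ⟨Measure.dirac (Pi.single i 1), fun x => ⟨integrable_dirac (by simp [enorm_lt_top]), ?_⟩⟩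
  rw [integral_dirac]
  simp [Pi.single_apply]

/-- In the coordinates `(s + t) / 2` and `(s - t) / 2` the maximum `max |s| |t|` is an `ℓ₁` norm, and
`ℓ₁` planes embed into `L_q`. -/
theorem isLqRep_max_rpow {n : ℕ} {q : ℝ} (hq0 : 0 < q) (hq1 : q ≤ 1) (i j : Fin n) :
    IsLqRep q (fun x => max |x i| |x j| ^ q) := by
  obtain ⟨ν, hν⟩ := exists_measure_abs_add_abs_rpow hq0 hq1
  set φ : ℝ × ℝ → Fin n → ℝ := fun p =>
    Pi.single i ((p.1 + p.2) / 2) + Pi.single j ((p.1 - p.2) / 2) with hφ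
  have hm : Measurable φ := by
    refine measurable_pi_lambda _ fun k => ?_
    simp only [hφ, Pi.add_apply, Pi.single_apply]
    split_ifs <;> fun_prop
  have hpair : ∀ (x : Fin n → ℝ) (p : ℝ × ℝ), ∑ k, φ p k * x k =
      (x i + x j) / 2 * p.1 + (x i - x j) / 2 * p.2 := by
    intro x p
    simp only [hφ, Pi.add_apply, Pi.single_apply, add_mul, ite_mul, zero_mul,
      Finset.sum_add_distrib, Finset.sum_ite_eq', Finset.mem_univ, if_true]
    ring
  have hmeas : ∀ x : Fin n → ℝ, Measurable (fun ξ : Fin n → ℝ => |∑ k, ξ k * x k| ^ q) := by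
    intro x
    fun_prop
  have hmax : ∀ s t : ℝ, |(s + t) / 2| + |(s - t) / 2| = max |s| |t| := by
    intro s t
    grind
  refine ⟨ν.map φ, fun x => ⟨?_, ?_⟩⟩
  · rw [integrable_map_measure (hmeas x).aestronglyMeasurable hm.aemeasurable]
    simp only [Function.comp_def, hpair]
    exact (hν _ _).1
  · rw [integral_map hm.aemeasurable (hmeas x).aestronglyMeasurable]
    simp only [hpair]
    rw [(hν _ _).2, hmax]

/-- In a non-increasing sequence the entry `y i` is the maximum of the `n - 1 - i` pairs formed with
later entries; each unordered pair is counted twice. -/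
theorem sum_sum_max_rpow_of_antitone {n : ℕ} (q : ℝ) {y : Fin n → ℝ} (hy : Antitone y) :
    ∑ i, ∑ j, (if i = j then 0 else max (y i) (y j) ^ q) =
      2 * ∑ i : Fin n, ((n : ℝ) - 1 - i) * y i ^ q := by
  have h : ∀ i j : Fin n, (if i = j then 0 else max (y i) (y j) ^ q) =
      (if i < j then y i ^ q else 0) + (if j < i then y j ^ q else 0) := by
    intro i j
    rcases lt_trichotomy i j with hij | rfl | hij
    · simp [hij, hij.ne, hij.not_gt, hy hij.le]
    · simp
    · simp [hij, hij.ne', hij.not_gt, hy hij.le]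
  have hcard : ∀ i : Fin n, ∑ j, (if i < j then y i ^ q else 0) = ((n : ℝ) - 1 - i) * y i ^ q := by
    intro i
    rw [← Finset.sum_filter, Finset.sum_const, nsmul_eq_mul, Finset.filter_lt_eq_Ioi, Fin.card_Ioi]
    have := i.2
    rw [Nat.cast_sub (by omega), Nat.cast_sub (by omega)]
    push_cast
    ring
  simp only [h, Finset.sum_add_distrib]
  rw [Finset.sum_comm (f := fun i j : Fin n => if j < i then y j ^ q else 0)]
  simp only [hcard]
  ring

/-- For weights in arithmetic progression the Lorentz functional is a combination of the powers
`|xᵢ| ^ q` and `max |xᵢ| |xⱼ| ^ q`. -/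
theorem lorentz_eq_of_arith {n : ℕ} (q : ℝ) {a : ℕ → ℝ} {d : ℝ}
    (ha : ∀ i, i < n → a (i + 1) = a n + ((n : ℝ) - 1 - i) * d) (x : Fin n → ℝ) :
    lorentz a q x = a n * ∑ i, |x i| ^ q +
      d / 2 * ∑ i, ∑ j, (if i = j then 0 else max |x i| |x j| ^ q) := by
  set σ := Tuple.sort (fun j => -|x j|) with hσ
  have h1 : ∑ i, |x i| ^ q = ∑ i, dstar x i ^ q :=
    (Equiv.sum_comp σ (fun i => |x i| ^ q)).symm
  have h2 : ∑ i, ∑ j, (if i = j then 0 else max |x i| |x j| ^ q) =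
      ∑ i, ∑ j, (if i = j then 0 else max (dstar x i) (dstar x j) ^ q) := by
    rw [← Equiv.sum_comp σ]
    refine Finset.sum_congr rfl fun i _ => ?_
    rw [← Equiv.sum_comp σ]
    refine Finset.sum_congr rfl fun j _ => ?_
    simp only [EmbeddingLike.apply_eq_iff_eq]
    rfl
  rw [h1, h2, sum_sum_max_rpow_of_antitone q (dstar_antitone x), lorentz, Finset.mul_sum,
    Finset.mul_sum, Finset.mul_sum, ← Finset.sum_add_distrib]
  refine Finset.sum_congr rfl fun i _ => ?_
  rw [ha i i.2]
  ring

theorem isLqRep_lorentz {n : ℕ} {q : ℝ} (hq0 : 0 < q) (hq1 : q ≤ 1) {a : ℕ → ℝ} {d : ℝ}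
    (hd : 0 ≤ d) (han : 0 ≤ a n)
    (ha : ∀ i, i < n → a (i + 1) = a n + ((n : ℝ) - 1 - i) * d) :
    IsLqRep (n := n) q (lorentz a q) := by
  have h : lorentz (n := n) a q = fun x => a n * ∑ i, |x i| ^ q +
      d / 2 * ∑ i, ∑ j, (if i = j then 0 else max |x i| |x j| ^ q) :=
    funext fun x => lorentz_eq_of_arith q ha x
  rw [h]
  refine ((IsLqRep.sum _ fun i _ => isLqRep_abs_rpow q i).const_mul han).add
    ((IsLqRep.sum _ fun i _ => IsLqRep.sum _ fun j _ => ?_).const_mul (by positivity))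
  by_cases hij : i = j
  · simpa [hij] using IsLqRep.zero
  · simpa [hij] using isLqRep_max_rpow hq0 hq1 i j

/-- For `n ≥ 2`, `0 < q ≤ 1` and weights `a 1 ≥ a 2 ≥ … ≥ a n ≥ 0` not all zero,
the Lorentz space `ℓ_{w,q}^n` is isometric to a subspace of `L_q` iff the
weights form an arithmetic progression. -/
theorem stmt0 (n : ℕ) (hn : 2 ≤ n) (q : ℝ) (hq0 : 0 < q) (hq1 : q ≤ 1)
    (a : ℕ → ℝ)
    (hmono : ∀ i, 1 ≤ i → i + 1 ≤ n → a (i + 1) ≤ a i)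
    (hnonneg : ∀ i, 1 ≤ i → i ≤ n → 0 ≤ a i)
    (hnz : ∃ i, 1 ≤ i ∧ i ≤ n ∧ a i ≠ 0) :
    (∃ (Ω : Type) (_ : MeasurableSpace Ω) (μ : Measure Ω)
        (T : (Fin n → ℝ) →ₗ[ℝ] (Ω → ℝ)),
      ∀ x : Fin n → ℝ,
        (∫ ω, |T x ω| ^ q ∂μ) =
          ((∑ i : Fin n, a (i.1 + 1) * dstar x i ^ q) ^ (1 / q)) ^ q) ↔
    (∀ i, 1 ≤ i → i + 2 ≤ n → a i - a (i + 1) = a (i + 1) - a (i + 2)) := by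
  have hN : ∀ x : Fin n → ℝ, ((∑ i : Fin n, a (i.1 + 1) * dstar x i ^ q) ^ (1 / q)) ^ q =
      lorentz a q x := by
    intro x
    rw [one_div]
    exact Real.rpow_inv_rpow (lorentz_nonneg hnonneg q x) hq0.ne'
  simp only [hN]
  constructor
  · rintro ⟨Ω, _, μ, T, hT⟩ i hi hin
    have ha1 : 0 < a 1 := by
      obtain ⟨m, hm1, hmn, hm⟩ := hnz
      have hle : ∀ m, 1 ≤ m → m ≤ n → a m ≤ a 1 := by
        intro m hm1
        induction m, hm1 using Nat.le_induction with
        | base => intro _; exact le_rfl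
        | succ m hm1 ih => exact fun h => (hmono m hm1 h).trans (ih (by omega))
      exact ((hnonneg m hm1 hmn).lt_of_ne' hm).trans_le (hle m hm1 hmn)
    obtain ⟨k, rfl⟩ : ∃ k, i = k + 1 := ⟨i - 1, by omega⟩
    have h := weights_of_integral_eq_lorentz hq0 hq1 hnonneg ha1 T hT (k := k) (by omega)
    simp only [add_assoc, Nat.reduceAdd] at h ⊢
    linarith
  · intro h
    have hlin : ∀ i, i < n → a (i + 1) = a 1 - i * (a 1 - a 2) := by
      have hdiff : ∀ i, i + 2 ≤ n → a (i + 1) - a (i + 2) = a 1 - a 2 := by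
        intro i
        induction i with
        | zero => intro _; rfl
        | succ i ih => exact fun hi => (h (i + 1) (by omega) (by omega)).symm.trans (ih (by omega))
      intro i
      induction i with
      | zero => intro _; simp
      | succ i ih =>
        intro hi
        have h1 := ih (by omega)
        have h2 := hdiff i (by omega)
        rw [show i + 1 + 1 = i + 2 from rfl]
        push_cast
        linarith
    have hd : 0 ≤ a 1 - a 2 := sub_nonneg.2 (hmono 1 le_rfl hn)
    have ha : ∀ i, i < n → a (i + 1) = a n + ((n : ℝ) - 1 - i) * (a 1 - a 2) := by
      intro i hi
      have h1 := hlin (n - 1) (by omega)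
      rw [Nat.sub_add_cancel (by omega), Nat.cast_sub (by omega), Nat.cast_one] at h1
      rw [hlin i hi, h1]
      ring
    obtain ⟨μ, hμ⟩ := isLqRep_lorentz hq0 hq1 hd (hnonneg n (by omega) le_rfl) ha
    let T : (Fin n → ℝ) →ₗ[ℝ] ((Fin n → ℝ) → ℝ) :=
      { toFun := fun x ξ => ∑ i, ξ i * x i
        map_add' := fun x y => by
          funext ξ
          simp [mul_add, Finset.sum_add_distrib]
        map_smul' := fun r x => by
          funext ξ
          simp only [Pi.smul_apply, smul_eq_mul, RingHom.id_apply, Finset.mul_sum]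
          exact Finset.sum_congr rfl fun i _ => by ring }
    exact ⟨Fin n → ℝ, inferInstance, μ, T, fun x => (hμ x).2⟩
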